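/- (Theorem 1, Convergence of reservoir systems on graphs.) Let Ã be a symmetric N×N real matrix, W an H×H real matrix, V an F×H real matrix, and X an N×F real matrix; set K = ρ(Ã) · ‖W‖₂ and assume 0 < K < 1. Let H* be the unique fixed point of the reservoir map Φ(M) = tanh(Ã M W + X V), let the iterates start from the zero initial condition H₀ = 0 (so that H₁ = tanh(X V)), and assume h := ‖tanh(X V)‖_F > 0. Then for every convergence threshold ε > 0 and every natural number t with t ≥ (ln ε + ln(1 − K) − ln h) / ln K, one has ‖H* − H_t‖_F ≤ ε. -/

import Mathlib

noncomputable def frobNorm {m n : Type*} [Fintype m] [Fintype n]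
    (M : Matrix m n ℝ) : ℝ :=
  Real.sqrt (∑ i, ∑ j, (M i j) ^ 2)

noncomputable def specNorm {m n : ℕ} (M : Matrix (Fin m) (Fin n) ℝ) : ℝ :=
  ‖LinearMap.toContinuousLinearMap (Matrix.toEuclideanLin M)‖

noncomputable def specRad {n : ℕ} (A : Matrix (Fin n) (Fin n) ℝ)
    (hA : A.IsHermitian) : ℝ :=
  ⨆ i, |hA.eigenvalues i|

noncomputable def mtanh {m n : Type*} (M : Matrix m n ℝ) : Matrix m n ℝ :=
  Matrix.of fun i j => Real.tanh (M i j)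

noncomputable def resMap {N F Hd : ℕ} (Atil : Matrix (Fin N) (Fin N) ℝ)
    (W : Matrix (Fin Hd) (Fin Hd) ℝ) (V : Matrix (Fin F) (Fin Hd) ℝ)
    (X : Matrix (Fin N) (Fin F) ℝ) (M : Matrix (Fin N) (Fin Hd) ℝ) :
    Matrix (Fin N) (Fin Hd) ℝ :=
  mtanh (Atil * M * W + X * V)

theorem tanh_lip (x y : ℝ) : |Real.tanh x - Real.tanh y| ≤ |x - y| := by
  have hd : ∀ z, HasDerivAt Real.tanh (1 / Real.cosh z ^ 2) z := by
    intro z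
    have h := (Real.hasDerivAt_sinh z).div (Real.hasDerivAt_cosh z) (Real.cosh_pos z).ne'
    have e : Real.tanh = Real.sinh / Real.cosh := by
      funext w
      simp [Real.tanh_eq_sinh_div_cosh]
    rw [e]
    refine h.congr_deriv ?_
    have := Real.cosh_sq z
    congr 1
    linarith
  have := Convex.norm_image_sub_le_of_norm_hasDerivWithin_le (f := Real.tanh) (C := 1)
    (s := Set.univ) (x := y) (y := x)
    (fun z _ => (hd z).hasDerivWithinAt) (fun z _ => by
      have h1 := Real.one_le_cosh z
      rw [Real.norm_eq_abs, abs_of_nonneg (by positivity)]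
      rw [div_le_one (by positivity)]
      nlinarith) convex_univ (Set.mem_univ _) (Set.mem_univ _)
  simpa using this

theorem frobNorm_nonneg {m n : Type*} [Fintype m] [Fintype n] (M : Matrix m n ℝ) :
    0 ≤ frobNorm M := Real.sqrt_nonneg _

theorem frobNorm_add_le {m n : Type*} [Fintype m] [Fintype n] (M P : Matrix m n ℝ) :
    frobNorm (M + P) ≤ frobNorm M + frobNorm P := by
  let _ : NormedAddCommGroup (Matrix m n ℝ) := Matrix.frobeniusNormedAddCommGroup
  have key : ∀ Q : Matrix m n ℝ, frobNorm Q = ‖Q‖ := by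
    intro Q
    rw [Matrix.frobenius_norm_def, frobNorm, Real.sqrt_eq_rpow]
    simp
  rw [key, key, key]
  exact norm_add_le _ _

theorem frobNorm_transpose {m n : Type*} [Fintype m] [Fintype n] (M : Matrix m n ℝ) :
    frobNorm M.transpose = frobNorm M := by
  unfold frobNorm
  rw [Finset.sum_comm]
  rfl

theorem frobNorm_mul_le {n k : ℕ} (A : Matrix (Fin n) (Fin n) ℝ) (c : ℝ) (hc : 0 ≤ c)
    (h : ∀ v : EuclideanSpace ℝ (Fin n), ‖Matrix.toEuclideanLin A v‖ ≤ c * ‖v‖)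
    (M : Matrix (Fin n) (Fin k) ℝ) : frobNorm (A * M) ≤ c * frobNorm M := by
  unfold frobNorm
  rw [← Real.sqrt_sq hc, ← Real.sqrt_mul (sq_nonneg c)]
  apply Real.sqrt_le_sqrt
  rw [Finset.sum_comm, Finset.sum_comm (f := fun i j => M i j ^ 2), Finset.mul_sum]
  apply Finset.sum_le_sum
  intro j _
  have := h (WithLp.toLp 2 (fun i => M i j))
  have h2 := pow_le_pow_left₀ (norm_nonneg _) this 2
  rw [mul_pow, EuclideanSpace.norm_sq_eq, EuclideanSpace.norm_sq_eq] at h2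
  simpa [Matrix.toLpLin_apply, Matrix.mulVec, dotProduct, Matrix.mul_apply] using h2

theorem specRad_nonneg {n : ℕ} (A : Matrix (Fin n) (Fin n) ℝ) (hA : A.IsHermitian) :
    0 ≤ specRad A hA := Real.iSup_nonneg fun _ => abs_nonneg _

theorem specRad_bound {n : ℕ} (A : Matrix (Fin n) (Fin n) ℝ) (hA : A.IsHermitian)
    (v : EuclideanSpace ℝ (Fin n)) :
    ‖Matrix.toEuclideanLin A v‖ ≤ specRad A hA * ‖v‖ := by
  have h0 := specRad_nonneg A hA
  refine (sq_le_sq₀ (norm_nonneg _) (by positivity)).mp ?_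
  rw [mul_pow, ← hA.eigenvectorBasis.sum_sq_norm_inner_right,
    ← hA.eigenvectorBasis.sum_sq_norm_inner_right v, Finset.mul_sum]
  apply Finset.sum_le_sum
  intro i _
  have hs := Matrix.isSymmetric_toEuclideanLin_iff.mpr hA
  have he : Matrix.toEuclideanLin A (hA.eigenvectorBasis i)
      = hA.eigenvalues i • hA.eigenvectorBasis i := by
    rw [Matrix.toEuclideanLin_apply, hA.mulVec_eigenvectorBasis]
    rfl
  rw [← hs, he, inner_smul_left, norm_mul, mul_pow]
  have hle : |hA.eigenvalues i| ≤ specRad A hA :=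
    le_ciSup (f := fun i => |hA.eigenvalues i|) (Set.finite_range _).bddAbove i
  gcongr
  simpa using hle

theorem specNorm_bound {n : ℕ} (W : Matrix (Fin n) (Fin n) ℝ)
    (v : EuclideanSpace ℝ (Fin n)) :
    ‖Matrix.toEuclideanLin W.transpose v‖ ≤ specNorm W * ‖v‖ := by
  have h : specNorm W.transpose = specNorm W := Matrix.l2_opNorm_conjTranspose W
  rw [← h]
  exact (LinearMap.toContinuousLinearMap (Matrix.toEuclideanLin W.transpose)).le_opNorm v

theorem resMap_lip {N F Hd : ℕ} (A : Matrix (Fin N) (Fin N) ℝ) (hA : A.IsHermitian)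
    (W : Matrix (Fin Hd) (Fin Hd) ℝ) (V : Matrix (Fin F) (Fin Hd) ℝ)
    (X : Matrix (Fin N) (Fin F) ℝ) (M P : Matrix (Fin N) (Fin Hd) ℝ) :
    frobNorm (resMap A W V X M - resMap A W V X P)
      ≤ specRad A hA * specNorm W * frobNorm (M - P) := by
  have hW : 0 ≤ specNorm W := norm_nonneg _
  have h1 : frobNorm (resMap A W V X M - resMap A W V X P)
      ≤ frobNorm (A * ((M - P) * W)) := by
    unfold frobNorm
    apply Real.sqrt_le_sqrt
    refine Finset.sum_le_sum fun i _ => Finset.sum_le_sum fun j _ => ?_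
    apply sq_le_sq.mpr
    refine (tanh_lip _ _).trans (le_of_eq ?_)
    congr 1
    rw [Matrix.sub_mul, Matrix.mul_sub, ← Matrix.mul_assoc, ← Matrix.mul_assoc]
    simp
  have h2 := frobNorm_mul_le A _ (specRad_nonneg A hA) (specRad_bound A hA) ((M - P) * W)
  have h3 := frobNorm_mul_le W.transpose _ hW (specNorm_bound W) (M - P).transpose
  rw [← Matrix.transpose_mul, frobNorm_transpose, frobNorm_transpose] at h3
  have h4 := mul_le_mul_of_nonneg_left h3 (specRad_nonneg A hA)
  rw [mul_assoc]
  linarith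

/-- Theorem 1 (Convergence of reservoir systems on graphs): starting from the
zero initial condition, after t ≥ (ln ε + ln(1−K) − ln h)/ln K iterations the
state is within ε of the fixed point. -/
theorem reservoir_convergence_iterations {N F Hd : ℕ}
    (Atil : Matrix (Fin N) (Fin N) ℝ) (hA : Atil.IsHermitian)
    (W : Matrix (Fin Hd) (Fin Hd) ℝ) (V : Matrix (Fin F) (Fin Hd) ℝ)
    (X : Matrix (Fin N) (Fin F) ℝ)
    (hK0 : 0 < specRad Atil hA * specNorm W)
    (hK1 : specRad Atil hA * specNorm W < 1)
    (Hstar : Matrix (Fin N) (Fin Hd) ℝ)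
    (hfix : resMap Atil W V X Hstar = Hstar)
    (hh : 0 < frobNorm (mtanh (X * V)))
    (ε : ℝ) (hε : 0 < ε) (t : ℕ)
    (ht : (Real.log ε + Real.log (1 - specRad Atil hA * specNorm W)
            - Real.log (frobNorm (mtanh (X * V))))
          / Real.log (specRad Atil hA * specNorm W) ≤ (t : ℝ)) :
    frobNorm (Hstar - (resMap Atil W V X)^[t] 0) ≤ ε := by
  have hlip := resMap_lip Atil hA W V X
  set K := specRad Atil hA * specNorm W with hK
  set h := frobNorm (mtanh (X * V)) with hh'
  have hiter : ∀ s : ℕ, frobNorm (Hstar - (resMap Atil W V X)^[s] 0)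
      ≤ K ^ s * frobNorm Hstar := by
    intro s
    induction s with
    | zero => simp
    | succ s ih =>
      rw [Function.iterate_succ_apply']
      have h1 := hlip Hstar ((resMap Atil W V X)^[s] 0)
      rw [hfix] at h1
      refine h1.trans ?_
      rw [pow_succ', mul_assoc K (K ^ s)]
      exact mul_le_mul_of_nonneg_left ih hK0.le
  have hstar : (1 - K) * frobNorm Hstar ≤ h := by
    have h1 := hiter 1
    have e : (resMap Atil W V X)^[1] 0 = mtanh (X * V) := by simp [resMap]
    rw [e] at h1
    have h2 := frobNorm_add_le (Hstar - mtanh (X * V)) (mtanh (X * V))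
    rw [sub_add_cancel] at h2
    linarith
  have hK1' : 0 < 1 - K := by linarith
  have hlog : Real.log K < 0 := Real.log_neg hK0 hK1
  rw [div_le_iff_of_neg hlog] at ht
  have hpow : K ^ t * h ≤ ε * (1 - K) := by
    rw [← Real.log_le_log_iff (by positivity) (by positivity),
      Real.log_mul (by positivity) hh.ne', Real.log_mul hε.ne' hK1'.ne', Real.log_pow]
    linarith
  have h5 : K ^ t * ((1 - K) * frobNorm Hstar) ≤ K ^ t * h :=
    mul_le_mul_of_nonneg_left hstar (by positivity)
  have h6 : K ^ t * frobNorm Hstar ≤ ε := by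
    refine le_of_mul_le_mul_right ?_ hK1'
    linarith
  exact (hiter t).trans h6
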